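/- There exist effectively computable constants c > 0 and N > 0 such that for all integers n > N and all integers l with 2 ≤ l ≤ n/(10·log n), one has a(n,l−1)² ≥ a(n,l−2)·a(n,l)·exp(n/l² − c/l²); in particular a(n,l−1)² ≥ a(n,l−2)·a(n,l) in this range for n sufficiently large. -/

import Mathlib

/-!
The term `k = l` of the sum defining `a n l` is `mainTerm n l = (l+1)^(l+n-1) / (l+1)!`, and in the
range `l ≤ n / (10 log n)` it dominates everything else. Indeed `|C(n,k,i)| ≤ n^(3i)`
(`abs_Cnki_le`), so the inner sum at `k = l - d` is at most `(e n³)^d` (`abs_inner_le`), whereas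
`mainTerm n (l-d) / mainTerm n l ≤ (1 - d/(l+1))^(n+l-d-1) ≤ exp (-d (n-1)/(l+1)) ≤ n^(-8d)`
(`mainTerm_ratio`). Summing over `d` gives `|a n l - mainTerm n l| ≤ mainTerm n l / n²`
(`abs_a_sub_mainTerm_le`).

For the main terms, with `s = n + l - 3`, the quotient
`mainTerm n (l-1)² / (mainTerm n (l-2) * mainTerm n l)` equals `(1 - 1/l²)^(-s) * (1 + 1/l)⁻¹`,
which is at least `exp (s/l² - 1/l) = exp ((n-3)/l²)` (`mainTerm_logConcave`).
The relative errors `1/n² ≤ 1/l²` cost only another `exp (-8/l²)`, so `c = 11` works.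
-/

open Finset Real

/-- The constant `C(n,k,i)` from Aluffi–Marcolli–Nascimento. -/
noncomputable def Cnki (n k i : ℕ) : ℝ :=
  ((-1 : ℝ) ^ i * (2 * (k : ℝ) * i + n * i + k + n - 1) + (k : ℝ) - i) / (i * (i + 1))
    - (1 / ((i : ℝ) * (k + 1) ^ i)) * ∑ j ∈ Finset.range (k + n - 1), (j : ℝ) ^ i

/-- The finite set of `m`-tuples of positive integers summing to `N`. -/
def posTuples (m N : ℕ) : Finset (Fin m → ℕ) :=
  (Fintype.piFinset fun _ => Finset.Icc 1 N).filter fun f => ∑ j, f j = N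

/-- `a n l = rk H^{2l}(M̄_{0,n})`, via the Aluffi–Marcolli–Nascimento formula. -/
noncomputable def a (n l : ℕ) : ℝ :=
  ∑ k ∈ Finset.range (l + 1),
    ((k + 1 : ℝ) ^ (k + n - 1) / (Nat.factorial (k + 1) : ℝ)) *
      ∑ m ∈ Finset.range (l - k + 1),
        (1 / (Nat.factorial m : ℝ)) *
          ∑ f ∈ posTuples m (l - k), ∏ j, Cnki n k (f j)

/-! ### The main term and bounds for the inner sums -/

/-- The summand `k = l` of `a n l`. -/
noncomputable def mainTerm (n l : ℕ) : ℝ :=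
  (l + 1 : ℝ) ^ (l + n - 1) / (Nat.factorial (l + 1) : ℝ)

lemma mainTerm_pos (n l : ℕ) : 0 < mainTerm n l := by
  unfold mainTerm; positivity

lemma abs_Cnki_le {n k i : ℕ} (hn : 10 ≤ n) (hk : k < n) (hi : 1 ≤ i) :
    |Cnki n k i| ≤ ((n : ℝ) ^ 3) ^ i := by
  have hn' : (10 : ℝ) ≤ n := by exact_mod_cast hn
  have hk' : (k : ℝ) + 1 ≤ n := by exact_mod_cast hk
  have hi' : (1 : ℝ) ≤ i := by exact_mod_cast hi
  have hk0 : (0 : ℝ) ≤ k := Nat.cast_nonneg k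
  have h1 : |((-1 : ℝ) ^ i * (2 * (k : ℝ) * i + n * i + k + n - 1) + (k : ℝ) - i)
      / (i * (i + 1))| ≤ 3 * n := by
    rw [abs_div, abs_of_pos (show (0 : ℝ) < i * (i + 1) by positivity), div_le_iff₀ (by positivity)]
    have hX : 0 ≤ 2 * (k : ℝ) * i + n * i + k + n - 1 := by
      have : 0 ≤ 2 * (k : ℝ) * i + n * i := by positivity
      linarith
    have hb : |(-1 : ℝ) ^ i * (2 * (k : ℝ) * i + n * i + k + n - 1) + (k : ℝ) - i|
        ≤ (2 * (k : ℝ) * i + n * i + k + n - 1) + k + i := by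
      rcases neg_one_pow_eq_or ℝ i with h | h <;> rw [h, abs_le] <;> constructor <;> linarith
    refine hb.trans ?_
    have e1 : (k : ℝ) * i ≤ (n - 1) * i := by
      apply mul_le_mul_of_nonneg_right <;> linarith
    have e2 : (n : ℝ) * 1 ≤ n * i := by gcongr
    have e3 : (n : ℝ) * i * 1 ≤ n * i * i := by gcongr
    nlinarith
  have h2 : |(1 / ((i : ℝ) * (k + 1) ^ i)) * ∑ j ∈ Finset.range (k + n - 1), (j : ℝ) ^ i|
      ≤ 2 * n * (2 * n) ^ i := by
    rw [abs_of_nonneg (by positivity)]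
    have hs : ∑ j ∈ Finset.range (k + n - 1), (j : ℝ) ^ i ≤ 2 * n * (2 * n) ^ i := by
      calc ∑ j ∈ Finset.range (k + n - 1), (j : ℝ) ^ i
          ≤ ∑ j ∈ Finset.range (k + n - 1), (2 * (n : ℝ)) ^ i := by
            apply Finset.sum_le_sum
            intro j hj
            have : j ≤ 2 * n := by have := Finset.mem_range.1 hj; omega
            gcongr
            exact_mod_cast this
        _ = ((k + n - 1 : ℕ) : ℝ) * (2 * n) ^ i := by simp
        _ ≤ 2 * n * (2 * n) ^ i := by
            gcongr
            have : k + n - 1 ≤ 2 * n := by omega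
            exact_mod_cast this
    have hc : 1 / ((i : ℝ) * (k + 1) ^ i) ≤ 1 := by
      rw [div_le_one (by positivity)]
      exact one_le_mul_of_one_le_of_one_le hi' (one_le_pow₀ (by linarith))
    calc _ ≤ 1 * ∑ j ∈ Finset.range (k + n - 1), (j : ℝ) ^ i := by gcongr
      _ ≤ _ := by rw [one_mul]; exact hs
  have h3 : |Cnki n k i| ≤ 3 * n + 2 * n * (2 * n) ^ i := by
    unfold Cnki
    exact (abs_sub _ _).trans (add_le_add h1 h2)
  have h4 : (1 : ℝ) ≤ (2 * n) ^ i := one_le_pow₀ (by linarith)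
  calc |Cnki n k i| ≤ 3 * n + 2 * n * (2 * n) ^ i := h3
    _ ≤ (5 * n) * (2 * n) ^ i := by nlinarith
    _ ≤ (5 * n) ^ i * (2 * n) ^ i := by
        gcongr
        exact le_self_pow₀ (by linarith) (by omega)
    _ = (10 * n * n) ^ i := by rw [← mul_pow]; ring_nf
    _ ≤ (n ^ 3) ^ i := by
        gcongr
        nlinarith [mul_nonneg (show (0 : ℝ) ≤ n - 10 by linarith) (sq_nonneg (n : ℝ))]

/-- The number of `m`-tuples is bounded by `d^m`, and `∑ d^m / m! ≤ exp d`. -/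
lemma abs_inner_le {n k d : ℕ} (hn : 10 ≤ n) (hk : k < n) :
    |∑ m ∈ Finset.range (d + 1), (1 / (Nat.factorial m : ℝ)) *
      ∑ f ∈ posTuples m d, ∏ j, Cnki n k (f j)| ≤ ((n : ℝ) ^ 4) ^ d := by
  have hn' : (10 : ℝ) ≤ n := by exact_mod_cast hn
  have key : ∀ m, |∑ f ∈ posTuples m d, ∏ j, Cnki n k (f j)|
      ≤ (d : ℝ) ^ m * ((n : ℝ) ^ 3) ^ d := by
    intro m
    have hf : ∀ f ∈ posTuples m d, |∏ j, Cnki n k (f j)| ≤ ((n : ℝ) ^ 3) ^ d := by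
      intro f hf
      simp only [posTuples, Finset.mem_filter, Fintype.mem_piFinset, Finset.mem_Icc] at hf
      rw [Finset.abs_prod]
      calc ∏ j, |Cnki n k (f j)| ≤ ∏ j, ((n : ℝ) ^ 3) ^ (f j) :=
            Finset.prod_le_prod (fun _ _ => abs_nonneg _)
              (fun j _ => abs_Cnki_le hn hk (hf.1 j).1)
        _ = ((n : ℝ) ^ 3) ^ d := by rw [Finset.prod_pow_eq_pow_sum, hf.2]
    have hcard : (posTuples m d).card ≤ d ^ m := by
      refine (Finset.card_filter_le _ _).trans ?_
      simp
    calc _ ≤ ∑ f ∈ posTuples m d, |∏ j, Cnki n k (f j)| := Finset.abs_sum_le_sum_abs _ _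
      _ ≤ (posTuples m d).card • ((n : ℝ) ^ 3) ^ d := Finset.sum_le_card_nsmul _ _ _ hf
      _ = ((posTuples m d).card : ℝ) * ((n : ℝ) ^ 3) ^ d := by rw [nsmul_eq_mul]
      _ ≤ _ := by gcongr; exact_mod_cast hcard
  calc _ ≤ ∑ m ∈ Finset.range (d + 1), |(1 / (Nat.factorial m : ℝ)) *
      ∑ f ∈ posTuples m d, ∏ j, Cnki n k (f j)| := Finset.abs_sum_le_sum_abs _ _
    _ ≤ ∑ m ∈ Finset.range (d + 1), ((d : ℝ) ^ m / (Nat.factorial m : ℝ)) *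
        ((n : ℝ) ^ 3) ^ d := by
        apply Finset.sum_le_sum
        intro m _
        rw [abs_mul, abs_of_nonneg (show (0 : ℝ) ≤ 1 / (Nat.factorial m : ℝ) by positivity)]
        calc _ ≤ 1 / (Nat.factorial m : ℝ) * ((d : ℝ) ^ m * ((n : ℝ) ^ 3) ^ d) := by
              gcongr; exact key m
          _ = _ := by ring
    _ = (∑ m ∈ Finset.range (d + 1), (d : ℝ) ^ m / (Nat.factorial m : ℝ)) *
        ((n : ℝ) ^ 3) ^ d := by rw [Finset.sum_mul]
    _ ≤ Real.exp d * ((n : ℝ) ^ 3) ^ d := by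
        gcongr
        exact Real.sum_le_exp_of_nonneg (Nat.cast_nonneg d) _
    _ = (Real.exp 1 * (n : ℝ) ^ 3) ^ d := by
        rw [mul_pow, ← Real.exp_nat_mul, mul_one]
    _ ≤ ((n : ℝ) ^ 4) ^ d := by
        have : Real.exp 1 ≤ n := by linarith [Real.exp_one_lt_d9]
        gcongr
        calc Real.exp 1 * (n : ℝ) ^ 3 ≤ n * (n : ℝ) ^ 3 := by gcongr
          _ = _ := by ring

/-! ### Domination by the main term -/

/-- The hypothesis says `exp (-(n-1)/(l+1)) ≤ n⁻⁸` for `l = k + d`. -/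
lemma mainTerm_ratio {n k d : ℕ} (hn : 1 ≤ n)
    (hl : 8 * Real.log n * ((k + d : ℕ) + 1 : ℝ) ≤ n - 1) :
    mainTerm n k * ((n : ℝ) ^ 8) ^ d ≤ mainTerm n (k + d) := by
  obtain ⟨q, rfl⟩ : ∃ q, n = q + 1 := ⟨n - 1, by omega⟩
  set L : ℝ := ((k + d : ℕ) : ℝ) + 1 with hL
  have hLpos : 0 < L := by positivity
  have hLk : (k : ℝ) + 1 = L - d := by rw [hL]; push_cast; ring
  have hnpos : (0 : ℝ) < ((q + 1 : ℕ) : ℝ) := by positivity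
  have hfac : ((k + d + 1).factorial : ℝ) ≤ ((k + 1).factorial : ℝ) * L ^ d := by
    have h2 : (k + d + 1).factorial ≤ (k + 1).factorial * (k + d + 1) ^ d := by
      rw [show k + d + 1 = (k + 1) + d by ring, ← Nat.factorial_mul_ascFactorial]
      gcongr
      exact Nat.ascFactorial_le_pow_add _ _
    rw [hL]
    exact_mod_cast h2
  -- `1 - d/L ≤ exp (-d/L)`, raised to the power `k + q ≥ q = n - 1`
  have hpow : ((k : ℝ) + 1) ^ (k + q) * (((q + 1 : ℕ) : ℝ) ^ 8) ^ d ≤ L ^ (k + q) := by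
    have e1 : ((k : ℝ) + 1) / L ≤ Real.exp (-(d / L)) := by
      have := Real.add_one_le_exp (-((d : ℝ) / L))
      refine le_trans (le_of_eq ?_) this
      rw [hLk]; field_simp; ring
    have e2 : (((k : ℝ) + 1) / L) ^ (k + q) ≤ Real.exp (-(d * (8 * Real.log ((q + 1 : ℕ) : ℝ)))) := by
      calc _ ≤ Real.exp (-(d / L)) ^ (k + q) := by gcongr
        _ = Real.exp ((k + q : ℕ) * (-(d / L))) := by rw [Real.exp_nat_mul]
        _ ≤ _ := by
          apply Real.exp_le_exp.2
          have h8 : 8 * Real.log ((q + 1 : ℕ) : ℝ) ≤ q / L := by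
            rw [le_div_iff₀ hLpos]
            refine hl.trans ?_
            push_cast; linarith
          have h9 : (d : ℝ) * (8 * Real.log ((q + 1 : ℕ) : ℝ)) ≤ d * (q / L) := by gcongr
          have h10 : (0 : ℝ) ≤ k * (d / L) := by positivity
          have h11 : (d : ℝ) * (q / L) = q * (d / L) := by ring
          push_cast at *
          linarith
    have e3 : (((q + 1 : ℕ) : ℝ) ^ 8) ^ d = Real.exp (d * (8 * Real.log ((q + 1 : ℕ) : ℝ))) := by
      rw [Real.exp_nat_mul, show (8 : ℝ) = ((8 : ℕ) : ℝ) by norm_num, Real.exp_nat_mul,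
        Real.exp_log hnpos]
    rw [div_pow, div_le_iff₀ (by positivity)] at e2
    calc _ ≤ (Real.exp (-(d * (8 * Real.log ((q + 1 : ℕ) : ℝ)))) * L ^ (k + q)) *
          (((q + 1 : ℕ) : ℝ) ^ 8) ^ d := by gcongr
      _ = L ^ (k + q) := by
        rw [e3, Real.exp_neg]; field_simp
  unfold mainTerm
  rw [show k + (q + 1) - 1 = k + q by omega, show k + d + (q + 1) - 1 = (k + q) + d by omega,
    ← hL, pow_add L (k + q) d, div_mul_eq_mul_div, div_le_div_iff₀ (by positivity) (by positivity)]
  calc _ ≤ L ^ (k + q) * (((k + 1).factorial : ℝ) * L ^ d) := by gcongr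
    _ = _ := by ring

lemma abs_a_sub_mainTerm_le {n l : ℕ} (hn : 10 ≤ n) (hln : l < n)
    (hl : 8 * Real.log n * ((l : ℝ) + 1) ≤ n - 1) :
    |a n l - mainTerm n l| ≤ mainTerm n l * (1 / (n : ℝ) ^ 2) := by
  have hn' : (10 : ℝ) ≤ n := by exact_mod_cast hn
  have hb := mainTerm_pos n l
  have hsplit : a n l - mainTerm n l = ∑ k ∈ Finset.range l, mainTerm n k *
      ∑ m ∈ Finset.range (l - k + 1), (1 / (Nat.factorial m : ℝ)) *
          ∑ f ∈ posTuples m (l - k), ∏ j, Cnki n k (f j) := by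
    unfold a
    rw [Finset.sum_range_succ]
    have : ∑ m ∈ Finset.range (l - l + 1), (1 / (Nat.factorial m : ℝ)) *
          ∑ f ∈ posTuples m (l - l), ∏ j, Cnki n l (f j) = 1 := by
      simp [posTuples]
    rw [this, mul_one]
    simp only [mainTerm]
    ring
  rw [hsplit]
  calc _ ≤ ∑ k ∈ Finset.range l, |mainTerm n k *
      ∑ m ∈ Finset.range (l - k + 1), (1 / (Nat.factorial m : ℝ)) *
          ∑ f ∈ posTuples m (l - k), ∏ j, Cnki n k (f j)| := Finset.abs_sum_le_sum_abs _ _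
    _ ≤ ∑ k ∈ Finset.range l, mainTerm n l * (1 / (n : ℝ) ^ 4) := by
        apply Finset.sum_le_sum
        intro k hk
        have hkl := Finset.mem_range.1 hk
        obtain ⟨d, rfl⟩ : ∃ d, l = k + d := ⟨l - k, by omega⟩
        rw [show k + d - k = d by omega, abs_mul, abs_of_pos (mainTerm_pos n k)]
        have h1 := abs_inner_le (k := k) (d := d) hn (by omega)
        have h2 := mainTerm_ratio (n := n) (k := k) (d := d) (by omega) hl
        have h3 : (n : ℝ) ^ 4 ≤ ((n : ℝ) ^ 4) ^ d :=
          le_self_pow₀ (one_le_pow₀ (by linarith)) (by omega)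
        rw [mul_one_div, le_div_iff₀ (by positivity)]
        have hk0 := mainTerm_pos n k
        calc _ ≤ mainTerm n k * ((n : ℝ) ^ 4) ^ d * ((n : ℝ) ^ 4) ^ d := by gcongr
          _ = mainTerm n k * ((n : ℝ) ^ 8) ^ d := by
            rw [mul_assoc, ← mul_pow]; ring_nf
          _ ≤ _ := h2
    _ = mainTerm n l * (l / (n : ℝ) ^ 4) := by
        rw [Finset.sum_const, Finset.card_range, nsmul_eq_mul]; ring
    _ ≤ mainTerm n l * (1 / (n : ℝ) ^ 2) := by
        gcongr ?_ * ?_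
        rw [div_le_div_iff₀ (by positivity) (by positivity)]
        have : (l : ℝ) ≤ n := by exact_mod_cast hln.le
        have h5 : (l : ℝ) ≤ (n : ℝ) ^ 2 := by nlinarith
        nlinarith [mul_le_mul_of_nonneg_right h5 (sq_nonneg (n : ℝ))]

/-! ### Log-concavity -/

lemma mainTerm_logConcave {n p : ℕ} (hn : 1 ≤ n) :
    mainTerm n p * mainTerm n (p + 2) * Real.exp (((n : ℝ) - 3) / ((p : ℝ) + 2) ^ 2)
      ≤ mainTerm n (p + 1) ^ 2 := by
  obtain ⟨q, rfl⟩ : ∃ q, n = q + 1 := ⟨n - 1, by omega⟩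
  set x : ℝ := (p : ℝ) + 2 with hx
  have hx2 : 2 ≤ x := by rw [hx]; linarith [Nat.cast_nonneg (α := ℝ) p]
  set E := Real.exp ((((q + 1 : ℕ) : ℝ) - 3) / x ^ 2) with hE
  have h1 : (1 - 1 / x ^ 2) ^ (p + q) * (1 + 1 / x) * E ≤ 1 := by
    have hx1 : 0 ≤ 1 - 1 / x ^ 2 := by
      rw [sub_nonneg, div_le_one (by positivity)]; nlinarith
    have e1 : (1 - 1 / x ^ 2) ≤ Real.exp (-(1 / x ^ 2)) := by
      linarith [Real.add_one_le_exp (-(1 / x ^ 2))]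
    have e2 : (1 + 1 / x) ≤ Real.exp (1 / x) := by
      linarith [Real.add_one_le_exp (1 / x)]
    calc _ ≤ Real.exp (-(1 / x ^ 2)) ^ (p + q) * Real.exp (1 / x) * E := by gcongr
      _ = Real.exp ((p + q : ℕ) * (-(1 / x ^ 2)) + 1 / x + (((q + 1 : ℕ) : ℝ) - 3) / x ^ 2) := by
          rw [Real.exp_add, Real.exp_add, Real.exp_nat_mul]
      _ = 1 := by
          rw [Real.exp_eq_one_iff]
          have : (p : ℝ) = x - 2 := by rw [hx]; ring
          push_cast
          rw [this]
          field_simp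
          ring
  have h2 : (x - 1) ^ (p + q) * (x + 1) ^ (p + q) * (x + 1) * E ≤ x ^ (2 * (p + q) + 1) := by
    have e : (x - 1) ^ (p + q) * (x + 1) ^ (p + q) * (x + 1) * E =
        x ^ (2 * (p + q) + 1) * ((1 - 1 / x ^ 2) ^ (p + q) * (1 + 1 / x) * E) := by
      rw [pow_succ, pow_mul, ← mul_pow]
      have : (x - 1) * (x + 1) = x ^ 2 * (1 - 1 / x ^ 2) := by field_simp; ring
      rw [this, mul_pow]
      field_simp
    rw [e]
    exact mul_le_of_le_one_right (by positivity) h1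
  have hm0 : mainTerm (q + 1) p = (x - 1) ^ (p + q) / ((p + 1).factorial : ℝ) := by
    unfold mainTerm
    rw [show p + (q + 1) - 1 = p + q by omega, show (p : ℝ) + 1 = x - 1 by rw [hx]; ring]
  have hm1 : mainTerm (q + 1) (p + 1) = x ^ (p + q + 1) / (x * ((p + 1).factorial : ℝ)) := by
    unfold mainTerm
    rw [show p + 1 + (q + 1) - 1 = p + q + 1 by omega, Nat.factorial_succ (p + 1)]
    push_cast
    rw [show (p : ℝ) + 1 + 1 = x by rw [hx]; ring]
  have hm2 : mainTerm (q + 1) (p + 2) =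
      (x + 1) ^ (p + q + 2) / ((x + 1) * (x * ((p + 1).factorial : ℝ))) := by
    unfold mainTerm
    rw [show p + 2 + (q + 1) - 1 = p + q + 2 by omega, Nat.factorial_succ (p + 2),
      Nat.factorial_succ (p + 1)]
    push_cast
    rw [show (p : ℝ) + 1 + 1 = x by rw [hx]; ring, show (p : ℝ) + 2 + 1 = x + 1 by rw [hx]]
  rw [hm0, hm1, hm2]
  set F : ℝ := ((p + 1).factorial : ℝ) with hF
  have hFpos : 0 < F := by positivity
  calc _ = (x - 1) ^ (p + q) * (x + 1) ^ (p + q) * (x + 1) * E / (x * F ^ 2) := by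
        field_simp; ring
    _ ≤ x ^ (2 * (p + q) + 1) / (x * F ^ 2) := by gcongr
    _ = _ := by field_simp; ring

/-- **Theorem.** There are effectively computable constants `c > 0` and `N > 0`
such that for all integers `n > N` and `2 ≤ l ≤ n/(10 log n)`,
`a(n,l−1)² ≥ a(n,l−2)·a(n,l)·exp(n/l² − c/l²)`; in particular
`a(n,l−1)² ≥ a(n,l−2)·a(n,l)` in this range for `n` sufficiently large. -/
theorem stmt14 :
    ∃ c : ℝ, 0 < c ∧ ∃ N : ℕ, 0 < N ∧ ∀ n l : ℕ, N < n → 2 ≤ l →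
      (l : ℝ) ≤ (n : ℝ) / (10 * Real.log n) →
      a n (l - 1) ^ 2 ≥
          a n (l - 2) * a n l *
            Real.exp ((n : ℝ) / (l : ℝ) ^ 2 - c / (l : ℝ) ^ 2) ∧
        a n (l - 1) ^ 2 ≥ a n (l - 2) * a n l := by
  refine ⟨11, by norm_num, 10000, by norm_num, ?_⟩
  intro n l hn hl2 hl
  obtain ⟨p, rfl⟩ : ∃ p, l = p + 2 := ⟨l - 2, by omega⟩
  rw [show p + 2 - 1 = p + 1 by omega, show p + 2 - 2 = p by omega]
  have hnR : (10000 : ℝ) < n := by exact_mod_cast hn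
  have hlogpos : 1 ≤ Real.log n := by
    rw [Real.le_log_iff_exp_le (by linarith)]
    linarith [Real.exp_one_lt_d9]
  rw [le_div_iff₀ (by positivity)] at hl
  have hlog : Real.log n ≤ n / 100 + 98 := by
    have h1 := Real.log_le_sub_one_of_pos (show (0 : ℝ) < n / 100 by linarith)
    have h2 := Real.log_le_sub_one_of_pos (show (0 : ℝ) < 100 by norm_num)
    rw [Real.log_div (by linarith) (by norm_num)] at h1
    linarith
  have happ : ∀ j : ℕ, j ≤ p + 2 →
      |a n j - mainTerm n j| ≤ mainTerm n j * (1 / (n : ℝ) ^ 2) := by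
    intro j hj
    have hj' : (j : ℝ) ≤ (p + 2 : ℕ) := by exact_mod_cast hj
    have hjl : (j : ℝ) * Real.log n ≤ (p + 2 : ℕ) * Real.log n := by gcongr
    apply abs_a_sub_mainTerm_le (by omega)
    · have h1 : (j : ℝ) * 1 ≤ (j : ℝ) * Real.log n := by gcongr
      have : (j : ℝ) < n := by linarith
      exact_mod_cast this
    · linarith
  have hlx : ((p + 2 : ℕ) : ℝ) ≤ n := by
    have h1 : ((p + 2 : ℕ) : ℝ) * 1 ≤ ((p + 2 : ℕ) : ℝ) * Real.log n := by gcongr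
    linarith
  have h0 := abs_le.1 (happ p (by omega))
  have h1 := abs_le.1 (happ (p + 1) (by omega))
  have h2 := abs_le.1 (happ (p + 2) le_rfl)
  have b0 := mainTerm_pos n p
  have b1 := mainTerm_pos n (p + 1)
  have b2 := mainTerm_pos n (p + 2)
  have hlc := mainTerm_logConcave (n := n) (p := p) (by omega)
  rw [show (p : ℝ) + 2 = ((p + 2 : ℕ) : ℝ) by push_cast; ring] at hlc
  set x : ℝ := ((p + 2 : ℕ) : ℝ) with hx
  have hxpos : 0 < x := by positivity
  set ε : ℝ := 1 / (n : ℝ) ^ 2 with hε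
  have hεpos : 0 < ε := by positivity
  have hε1 : ε ≤ 1 / 2 := by
    rw [hε, div_le_div_iff₀ (by positivity) (by norm_num)]; nlinarith
  have hεx : ε ≤ 1 / x ^ 2 := by rw [hε]; gcongr
  set T := Real.exp (-(4 / x ^ 2)) with hT
  have hTpos : 0 < T := Real.exp_pos _
  -- `exp (-4/x²) ≤ exp (-4ε) ≤ 1/(1 + 4ε) ≤ (1 - ε)/(1 + ε)`
  have hTε : (1 + ε) * T ≤ 1 - ε := by
    have e1 : 1 + 4 * ε ≤ Real.exp (4 / x ^ 2) := by
      have := Real.add_one_le_exp (4 / x ^ 2)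
      have e : 4 / x ^ 2 = 4 * (1 / x ^ 2) := by ring
      linarith
    have e2 : T * Real.exp (4 / x ^ 2) = 1 := by rw [hT, ← Real.exp_add]; simp
    have e3 : T * (1 + 4 * ε) ≤ 1 := by
      calc T * (1 + 4 * ε) ≤ T * Real.exp (4 / x ^ 2) := by gcongr
        _ = 1 := e2
    nlinarith
  have hexp : Real.exp ((n : ℝ) / x ^ 2 - 11 / x ^ 2) = Real.exp (((n : ℝ) - 3) / x ^ 2) * T ^ 2 := by
    rw [hT, ← Real.exp_nat_mul, ← Real.exp_add]
    congr 1
    push_cast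
    ring
  have A0 : 0 ≤ a n p := by nlinarith
  have A2 : 0 ≤ a n (p + 2) := by nlinarith
  have hmain : a n p * a n (p + 2) * Real.exp ((n : ℝ) / x ^ 2 - 11 / x ^ 2) ≤ a n (p + 1) ^ 2 := by
    calc _ ≤ (mainTerm n p * (1 + ε)) * (mainTerm n (p + 2) * (1 + ε)) *
          Real.exp ((n : ℝ) / x ^ 2 - 11 / x ^ 2) := by
          gcongr <;> linarith
      _ = (mainTerm n p * mainTerm n (p + 2) * Real.exp (((n : ℝ) - 3) / x ^ 2)) *
          ((1 + ε) * T) ^ 2 := by rw [hexp]; ring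
      _ ≤ mainTerm n (p + 1) ^ 2 * (1 - ε) ^ 2 := by gcongr
      _ = (mainTerm n (p + 1) * (1 - ε)) ^ 2 := by ring
      _ ≤ a n (p + 1) ^ 2 := by
          have : 0 ≤ mainTerm n (p + 1) * (1 - ε) := mul_nonneg b1.le (by linarith)
          gcongr
          linarith
  refine ⟨hmain, le_trans ?_ hmain⟩
  apply le_mul_of_one_le_right (mul_nonneg A0 A2)
  rw [Real.one_le_exp_iff, ← sub_div]
  exact div_nonneg (by linarith) (by positivity)
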